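/- Let T: Lip(X,E) → Lip(Y,F) be a linear biseparating map. For each y ∈ Y let Jy: E → F be the linear map e ↦ (Tê)(y), and let Y_d = {y ∈ Y : Jy is discontinuous}. Then the set {‖Jy‖ : y ∈ Y \ Y_d} of operator norms is bounded, Y_d is finite, and every point of Y_d is an isolated point of Y. -/

import Mathlib

/-!
The proof runs through the representation `T f y = J_y (f (h y))` for a bijection `h : Y → X`.

* `Near T P y` says that nonzero functions carried by `P` have images carried by arbitrarily small
  balls around `y`. Then `T f y` depends only on `f|_P` (`Near.eq`). Consequently, if `f` can be
  modified to a Lipschitz function equal to `f` near infinitely many points `x (2n)` and to `0`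
  near infinitely many `x (2n+1)`, and both unions of neighbourhoods are near `y`, then
  `T f y = 0` (`two_color`).
* `Related T x y` (every ball around `x` is near `y`) is symmetric in `T` and its inverse. Applying
  `two_color` along a sequence converging to `x` gives: `f x = 0` implies `T f y = 0`
  (`Related.apply_eq_zero`). Applying it along a uniformly separated sequence would give
  `T f y = 0` for all `f`; hence, by completeness, every `y` has a related `x` (`exists_related`).
  The two facts for `T` and its inverse give the bijection `h` (`exists_support_map`).
* If infinitely many `J_y` violate every bound, choose distinct `y n` and unit vectors `e n` with
  `‖J_{y n} (e n)‖ > n`. The points `h (y n)` have a uniformly separated or a convergent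
  subsequence, and a sum of disjoint cones of slope one in the directions `e n` gives a Lipschitz
  `f` with `T f` unbounded, respectively not Lipschitz at the limit point. In the second case this
  needs that `h⁻¹` is Lipschitz at the limit (`inverse_lipschitz_at`). Thus for some `C` all but
  finitely many `J_y` are bounded by `C` (`exists_finite_exceptional`).
* At a non-isolated point, `J_y` is a pointwise limit of maps with norm at most `C`, so it is
  continuous.

Scalars are real throughout, since the conclusion does not mention `𝕂`.
-/

open Metric Set Function Bornology
open scoped NNReal

/-- `f` is a bounded Lipschitz function. -/
def IsLip {X E : Type*} [PseudoMetricSpace X] [NormedAddCommGroup E] (f : X → E) : Prop :=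
  (∃ K : ℝ≥0, LipschitzWith K f) ∧ ∃ C : ℝ, ∀ x, ‖f x‖ ≤ C

/-- The cozero set of `f`. -/
def coz {X E : Type*} [Zero E] (f : X → E) : Set X := {x | f x ≠ 0}

/-- The norm `‖f‖_L = max {‖f‖_∞, L(f)}` on bounded Lipschitz functions. -/
noncomputable def lipNorm {X E : Type*} [PseudoMetricSpace X] [NormedAddCommGroup E]
    (f : X → E) : ℝ :=
  max (⨆ x, ‖f x‖) (⨆ p : X × X, ‖f p.1 - f p.2‖ / dist p.1 p.2)

/-- `T` is a linear biseparating map from `Lip(X,E)` onto `Lip(Y,F)`: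
it maps bounded Lipschitz functions to bounded Lipschitz functions, is linear,
restricts to a bijection between the spaces of bounded Lipschitz functions, and
both `T` and its inverse are separating (disjointness preserving). -/
structure IsBisep (𝕂 : Type*) {X Y E F : Type*} [RCLike 𝕂]
    [PseudoMetricSpace X] [PseudoMetricSpace Y]
    [NormedAddCommGroup E] [NormedSpace 𝕂 E] [NormedAddCommGroup F] [NormedSpace 𝕂 F]
    (T : (X → E) → (Y → F)) : Prop where
  maps_lip : ∀ f, IsLip f → IsLip (T f)
  map_add : ∀ f g, IsLip f → IsLip g → T (f + g) = T f + T g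
  map_smul : ∀ (c : 𝕂) (f : X → E), IsLip f → T (c • f) = c • T f
  inj : ∀ f g, IsLip f → IsLip g → T f = T g → f = g
  surj : ∀ g, IsLip g → ∃ f, IsLip f ∧ T f = g
  sep : ∀ f g, IsLip f → IsLip g → coz f ∩ coz g = ∅ → coz (T f) ∩ coz (T g) = ∅
  sep_inv : ∀ f g, IsLip f → IsLip g → coz (T f) ∩ coz (T g) = ∅ → coz f ∩ coz g = ∅

/-! ### Bounded Lipschitz functions -/

section LipFunctions

variable {X E : Type*} [PseudoMetricSpace X] [NormedAddCommGroup E]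

lemma IsLip.of_bounds {f : X → E} (K C : ℝ) (hK : ∀ z w, ‖f z - f w‖ ≤ K * dist z w)
    (hC : ∀ z, ‖f z‖ ≤ C) : IsLip f :=
  ⟨⟨K.toNNReal, LipschitzWith.of_dist_le' fun z w => by rw [dist_eq_norm]; exact hK z w⟩, C, hC⟩

lemma IsLip.exists_lip {f : X → E} (hf : IsLip f) :
    ∃ K : ℝ, 0 ≤ K ∧ ∀ z w, ‖f z - f w‖ ≤ K * dist z w := by
  obtain ⟨⟨K, hK⟩, -⟩ := hf
  exact ⟨K, K.2, fun z w => by rw [← dist_eq_norm]; exact hK.dist_le_mul z w⟩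

lemma IsLip.exists_bound {f : X → E} (hf : IsLip f) : ∃ C : ℝ, 0 ≤ C ∧ ∀ z, ‖f z‖ ≤ C := by
  obtain ⟨-, C, hC⟩ := hf
  exact ⟨max C 0, le_max_right _ _, fun z => (hC z).trans (le_max_left _ _)⟩

lemma IsLip.continuous {f : X → E} (hf : IsLip f) : Continuous f := by
  obtain ⟨⟨K, hK⟩, -⟩ := hf
  exact hK.continuous

lemma isLip_const (e : E) : IsLip (fun _ : X => e) :=
  IsLip.of_bounds 0 ‖e‖ (by simp) (by simp)

lemma isLip_zero : IsLip (0 : X → E) := isLip_const 0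

lemma IsLip.sub {f g : X → E} (hf : IsLip f) (hg : IsLip g) : IsLip (f - g) := by
  obtain ⟨K, -, hK⟩ := hf.exists_lip
  obtain ⟨L, -, hL⟩ := hg.exists_lip
  obtain ⟨C, -, hC⟩ := hf.exists_bound
  obtain ⟨D, -, hD⟩ := hg.exists_bound
  refine IsLip.of_bounds (K + L) (C + D) (fun z w => ?_) (fun z => ?_)
  · have : (f - g) z - (f - g) w = (f z - f w) - (g z - g w) := by
      simp only [Pi.sub_apply]; abel
    rw [this]
    have := norm_sub_le (f z - f w) (g z - g w)
    linarith [hK z w, hL z w]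
  · have := norm_sub_le (f z) (g z)
    simp only [Pi.sub_apply]
    linarith [hC z, hD z]

variable [NormedSpace ℝ E]

lemma IsLip.const_smul {f : X → E} (hf : IsLip f) (c : ℝ) : IsLip (c • f) := by
  obtain ⟨K, -, hK⟩ := hf.exists_lip
  obtain ⟨C, -, hC⟩ := hf.exists_bound
  refine IsLip.of_bounds (|c| * K) (|c| * C) (fun z w => ?_) (fun z => ?_)
  · simp only [Pi.smul_apply, ← smul_sub, norm_smul, Real.norm_eq_abs, mul_assoc]
    gcongr
    exact hK z w
  · simp only [Pi.smul_apply, norm_smul, Real.norm_eq_abs]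
    gcongr
    exact hC z

/-- Multiplication by a quotient `m / d` of Lipschitz functions which need not be Lipschitz near
the zeros of `d`: it suffices that `0 ≤ m ≤ d` and that `f` is dominated by `d`. -/
lemma IsLip.scale {f : X → E} {d m : X → ℝ} {Kd Km L : ℝ} (hf : IsLip f)
    (hd : ∀ z w, |d z - d w| ≤ Kd * dist z w) (hm : ∀ z w, |m z - m w| ≤ Km * dist z w)
    (hm0 : ∀ z, 0 ≤ m z) (hmd : ∀ z, m z ≤ d z) (hL0 : 0 ≤ L) (hL : ∀ z, ‖f z‖ ≤ L * d z) :
    IsLip (fun z => (m z / d z) • f z) := by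
  obtain ⟨K, hK0, hK⟩ := hf.exists_lip
  obtain ⟨C, hC0, hC⟩ := hf.exists_bound
  have ha0 : ∀ z, 0 ≤ m z / d z := fun z => div_nonneg (hm0 z) ((hm0 z).trans (hmd z))
  have ha1 : ∀ z, m z / d z ≤ 1 := fun z => div_le_one_of_le₀ (hmd z) ((hm0 z).trans (hmd z))
  have ham : ∀ z, m z / d z * d z = m z := fun z => by
    by_cases h : d z = 0
    · have := hmd z
      have := hm0 z
      rw [h]; simp; linarith
    · field_simp
  refine IsLip.of_bounds (K + L * (Km + Kd)) C (fun z w => ?_) (fun z => ?_)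
  · have e1 : (m z / d z) • f z - (m w / d w) • f w
        = (m w / d w) • (f z - f w) + (m z / d z - m w / d w) • f z := by
      rw [smul_sub, sub_smul]; abel
    have e2 : (m z / d z - m w / d w) * d z = (m z - m w) + (m w / d w) * (d w - d z) := by
      have h1 := ham z
      have h2 := ham w
      linear_combination h1 - h2
    have hdz : 0 ≤ d z := (hm0 z).trans (hmd z)
    have b1 : ‖(m w / d w) • (f z - f w)‖ ≤ K * dist z w := by
      rw [norm_smul, Real.norm_of_nonneg (ha0 w)]
      exact (mul_le_of_le_one_left (norm_nonneg _) (ha1 w)).trans (hK z w)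
    have b2 : |(m z / d z - m w / d w) * d z| ≤ (Km + Kd) * dist z w := by
      rw [e2]
      have h1 := abs_add_le (m z - m w) ((m w / d w) * (d w - d z))
      rw [abs_mul, abs_of_nonneg (ha0 w), abs_sub_comm (d w)] at h1
      have h2 := mul_le_of_le_one_left (abs_nonneg (d z - d w)) (ha1 w)
      linarith [hm z w, hd z w]
    have b3 : ‖(m z / d z - m w / d w) • f z‖ ≤ L * ((Km + Kd) * dist z w) := by
      rw [norm_smul, Real.norm_eq_abs]
      calc |m z / d z - m w / d w| * ‖f z‖
          ≤ |m z / d z - m w / d w| * (L * d z) := by gcongr; exact hL z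
        _ = L * |(m z / d z - m w / d w) * d z| := by rw [abs_mul, abs_of_nonneg hdz]; ring
        _ ≤ _ := by gcongr
    rw [e1]
    have := norm_add_le ((m w / d w) • (f z - f w)) ((m z / d z - m w / d w) • f z)
    linarith
  · rw [norm_smul, Real.norm_of_nonneg (ha0 z)]
    exact (mul_le_of_le_one_left (norm_nonneg _) (ha1 z)).trans (hC z)

lemma abs_dist_sub_dist_le (x z w : X) : |dist z x - dist w x| ≤ 1 * dist z w := by
  rw [one_mul]; exact abs_dist_sub_le z w x

/-- The cone `max 0 (r - dist z x)` is Lipschitz with constant one. -/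
lemma abs_cone_sub_le (x z w : X) (r : ℝ) :
    |max 0 (r - dist z x) - max 0 (r - dist w x)| ≤ 1 * dist z w := by
  refine (abs_max_sub_max_le_max _ _ _ _).trans ?_
  have := abs_dist_sub_dist_le x w z
  rw [sub_self, abs_zero, sub_sub_sub_cancel_left, dist_comm z w]
  exact max_le (by positivity) this

lemma IsLip.cone_smul {f : X → E} (hf : IsLip f) (x : X) {r : ℝ} (hr : 0 < r) :
    IsLip (fun z => (max 0 (r - dist z x) / r) • f z) := by
  obtain ⟨C, hC0, hC⟩ := hf.exists_bound
  refine hf.scale (d := fun _ => r) (Kd := 0) (L := C / r) (by simp)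
    (fun z w => abs_cone_sub_le x z w r) (fun z => le_max_left _ _) (fun z => ?_) (by positivity)
    (fun z => ?_)
  · exact max_le hr.le (by linarith [dist_nonneg (x := z) (y := x)])
  · rw [div_mul_cancel₀ _ hr.ne']; exact hC z

/-- A sum of cones over disjoint balls in directions of norm at most one is Lipschitz. -/
lemma exists_cone_sum (x : ℕ → X) (r : ℕ → ℝ) (e : ℕ → E) (R : ℝ) (hr : ∀ n, 0 < r n)
    (hR : ∀ n, r n ≤ R) (hsep : ∀ m n, m ≠ n → r m + r n ≤ dist (x m) (x n))
    (he : ∀ n, ‖e n‖ ≤ 1) :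
    ∃ f : X → E, IsLip f ∧ (∀ n, f (x n) = r n • e n) ∧
      ∀ z, (∀ n, r n ≤ dist z (x n)) → f z = 0 := by
  classical
  let c : ℕ → X → ℝ := fun n z => max 0 (r n - dist z (x n))
  have hc0 : ∀ n z, 0 ≤ c n z := fun n z => le_max_left _ _
  have hcz : ∀ n z, r n ≤ dist z (x n) → c n z = 0 := fun n z h => max_eq_left (by linarith)
  have huniq : ∀ m n z, m ≠ n → dist z (x n) < r n → c m z = 0 := by
    intro m n z hmn hz
    apply hcz
    have := hsep m n hmn
    have := dist_triangle_left (x m) (x n) z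
    linarith
  let f : X → E := fun z =>
    if h : ∃ n, dist z (x n) < r n then c h.choose z • e h.choose else 0
  have hf : ∀ n z, dist z (x n) < r n → f z = c n z • e n := by
    intro n z hz
    have h : ∃ n, dist z (x n) < r n := ⟨n, hz⟩
    have : h.choose = n := by
      by_contra hne
      have h1 := huniq _ n z hne hz
      have h2 : 0 < c h.choose z := lt_max_of_lt_right (by linarith [h.choose_spec])
      linarith
    simp only [f, dif_pos h, this]
  have hf0 : ∀ z, (∀ n, r n ≤ dist z (x n)) → f z = 0 := by
    intro z hz
    simp only [f]
    rw [dif_neg]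
    push Not
    exact hz
  have hRnn : 0 ≤ R := (hr 0).le.trans (hR 0)
  have hcn : ∀ n z, ‖c n z • e n‖ ≤ c n z := fun n z => by
    rw [norm_smul, Real.norm_of_nonneg (hc0 n z)]
    exact mul_le_of_le_one_right (hc0 n z) (he n)
  -- This settles the Lipschitz estimate unless the two points lie in different balls.
  have hone : ∀ n z w, ‖c n z • e n - c n w • e n‖ ≤ dist z w := fun n z w => by
    rw [← sub_smul, norm_smul, Real.norm_eq_abs]
    refine (mul_le_of_le_one_right (abs_nonneg _) (he n)).trans ?_
    simpa using abs_cone_sub_le (x n) z w (r n)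
  refine ⟨f, IsLip.of_bounds 1 R (fun z w => ?_) (fun z => ?_), fun n => ?_, hf0⟩
  · rw [one_mul]
    by_cases hz : ∃ n, dist z (x n) < r n
    · obtain ⟨n, hn⟩ := hz
      by_cases hw : ∃ m, dist w (x m) < r m
      · obtain ⟨m, hm⟩ := hw
        rw [hf n z hn, hf m w hm]
        by_cases hmn : m = n
        · subst hmn; exact hone m z w
        · have h1 := norm_sub_le (c n z • e n) (c m w • e m)
          have h2 := hcn n z
          have h3 := hcn m w
          have h4 : c n z = r n - dist z (x n) := max_eq_right (by linarith)
          have h5 : c m w = r m - dist w (x m) := max_eq_right (by linarith)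
          have h6 := hsep m n hmn
          have h7 := dist_triangle4 (x m) w z (x n)
          rw [dist_comm (x m) w, dist_comm w z] at h7
          linarith
      · push Not at hw
        rw [hf n z hn, hf0 w hw]
        have := hone n z w
        rwa [hcz n w (hw n), zero_smul] at this
    · push Not at hz
      rw [hf0 z hz]
      by_cases hw : ∃ m, dist w (x m) < r m
      · obtain ⟨m, hm⟩ := hw
        rw [hf m w hm]
        have := hone m z w
        rwa [hcz m z (hz m), zero_smul] at this
      · push Not at hw
        rw [hf0 w hw]; simp
  · by_cases hz : ∃ n, dist z (x n) < r n
    · obtain ⟨n, hn⟩ := hz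
      rw [hf n z hn]
      refine (hcn n z).trans (max_le hRnn ?_)
      linarith [hR n, dist_nonneg (x := z) (y := x n)]
    · push Not at hz
      rw [hf0 z hz]; simpa using hRnn
  · rw [hf n (x n) (by simpa using hr n)]
    simp [c, (hr n).le]

end LipFunctions

/-! ### Extraction of subsequences -/

/-- In a complete space every sequence has a convergent or a uniformly separated subsequence. -/
lemma exists_subseq_dichotomy {X : Type*} [MetricSpace X] [CompleteSpace X] (x : ℕ → X) :
    (∃ a, ∃ φ : ℕ → ℕ, StrictMono φ ∧ Filter.Tendsto (x ∘ φ) Filter.atTop (nhds a)) ∨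
    ∃ δ > 0, ∃ φ : ℕ → ℕ, StrictMono φ ∧ ∀ m n, m ≠ n → δ ≤ dist (x (φ m)) (x (φ n)) := by
  by_cases htb : TotallyBounded (range x)
  · left
    have hc : IsCompact (closure (range x)) :=
      htb.closure.isCompact_of_isClosed isClosed_closure
    obtain ⟨a, -, φ, hφ, h⟩ := hc.tendsto_subseq (x := x)
      (fun n => subset_closure (mem_range_self n))
    exact ⟨a, φ, hφ, h⟩
  · right
    rw [Metric.totallyBounded_iff] at htb
    push Not at htb
    obtain ⟨δ, hδ, h⟩ := htb
    refine ⟨δ, hδ, ?_⟩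
    obtain ⟨φ, -, hφ⟩ := exists_seq_of_forall_finset_exists (fun _ : ℕ => True)
      (fun m n => m < n ∧ δ ≤ dist (x m) (x n)) (by
        intro s _
        have h1 := h (x '' (Finset.range (s.sup id + 1) : Set ℕ))
          ((Finset.finite_toSet _).image x)
        rw [not_subset] at h1
        obtain ⟨_, ⟨n, rfl⟩, hn⟩ := h1
        simp only [mem_iUnion, not_exists, mem_ball, not_lt] at hn
        have hn' : ∀ k, k < s.sup id + 1 → δ ≤ dist (x n) (x k) := fun k hk =>
          hn (x k) ⟨k, by simpa using hk, rfl⟩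
        refine ⟨n, trivial, fun k hk => ?_⟩
        have hks : k ≤ s.sup id := Finset.le_sup (f := id) hk
        refine ⟨?_, by rw [dist_comm]; exact hn' k (by omega)⟩
        by_contra hlt
        have := hn' n (by omega)
        rw [dist_self] at this
        linarith)
    refine ⟨φ, fun m n hmn => (hφ m n hmn).1, fun m n hmn => ?_⟩
    rcases lt_or_gt_of_ne hmn with h1 | h1
    · exact (hφ m n h1).2
    · rw [dist_comm]; exact (hφ n m h1).2

/-- A sequence converging to `a` from outside `a` has a subsequence whose distances to `a` decay so
fast that balls with a quarter of these distances as radii are disjoint. -/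
lemma exists_subseq_sparse {X : Type*} [MetricSpace X] {x : ℕ → X} {a : X}
    (hx : Filter.Tendsto x Filter.atTop (nhds a)) (hne : ∃ᶠ n in Filter.atTop, x n ≠ a) :
    ∃ φ : ℕ → ℕ, StrictMono φ ∧ (∀ n, x (φ n) ≠ a) ∧ ∀ m n, m ≠ n →
      dist (x (φ m)) a / 4 + dist (x (φ n)) a / 4 ≤ dist (x (φ m)) (x (φ n)) := by
  obtain ⟨φ, hP, hφ⟩ := exists_seq_of_forall_finset_exists (fun n : ℕ => x n ≠ a)
    (fun m n => m < n ∧ dist (x n) a < dist (x m) a / 2) (by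
      intro s hs
      have h1 : ∀ᶠ n in Filter.atTop, ∀ k ∈ s, k < n ∧ dist (x n) a < dist (x k) a / 2 := by
        rw [Filter.eventually_all_finset]
        intro k hk
        have hpos : 0 < dist (x k) a / 2 := half_pos (dist_pos.2 (hs k hk))
        exact (Filter.eventually_gt_atTop k).and (Metric.tendsto_nhds.1 hx _ hpos)
      exact (hne.and_eventually h1).exists)
  refine ⟨φ, fun m n hmn => (hφ m n hmn).1, hP, ?_⟩
  have key : ∀ m n, m < n →
      dist (x (φ m)) a / 4 + dist (x (φ n)) a / 4 ≤ dist (x (φ m)) (x (φ n)) := by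
    intro m n hmn
    have h1 := (hφ m n hmn).2
    have h2 := dist_triangle (x (φ m)) (x (φ n)) a
    have h3 : 0 ≤ dist (x (φ m)) a := dist_nonneg
    linarith
  intro m n hmn
  rcases lt_or_gt_of_ne hmn with h1 | h1
  · exact key m n h1
  · rw [dist_comm (x (φ m)) (x (φ n)), add_comm]; exact key n m h1

/-! ### Locality of biseparating maps -/

section Bisep

variable {X Y E F : Type*} [MetricSpace X] [MetricSpace Y]
  [NormedAddCommGroup E] [NormedSpace ℝ E] [NormedAddCommGroup F] [NormedSpace ℝ F]
  {T : (X → E) → (Y → F)}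

lemma IsBisep.map_zero (hT : IsBisep ℝ T) : T 0 = 0 := by
  have := hT.map_smul 0 0 isLip_zero
  simpa using this

lemma IsBisep.map_sub (hT : IsBisep ℝ T) {f g : X → E} (hf : IsLip f) (hg : IsLip g) :
    T (f - g) = T f - T g := by
  have h := hT.map_add (f - g) g (hf.sub hg) hg
  rw [sub_add_cancel] at h
  rw [h, add_sub_cancel_right]

/-- A biseparating map has a biseparating inverse. -/
lemma IsBisep.exists_inverse (hT : IsBisep ℝ T) :
    ∃ S : (Y → F) → (X → E), IsBisep ℝ S ∧ (∀ f, IsLip f → S (T f) = f) ∧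
      ∀ g, IsLip g → T (S g) = g := by
  classical
  let S : (Y → F) → (X → E) := fun g => if h : IsLip g then (hT.surj g h).choose else 0
  have hS : ∀ g, IsLip g → IsLip (S g) ∧ T (S g) = g := fun g hg => by
    simp only [S, dif_pos hg]
    exact (hT.surj g hg).choose_spec
  have hST : ∀ f, IsLip f → S (T f) = f := fun f hf =>
    hT.inj _ _ (hS _ (hT.maps_lip f hf)).1 hf (hS _ (hT.maps_lip f hf)).2
  have lip_add : ∀ f g : X → E, IsLip f → IsLip g → IsLip (f + g) := fun f g hf hg => by
    have := hf.sub (isLip_zero.sub hg)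
    simpa using this
  refine ⟨S, ⟨fun g hg => (hS g hg).1, fun f g hf hg => ?_, fun c f hf => ?_,
    fun f g hf hg h => ?_, fun f hf => ⟨T f, hT.maps_lip f hf, hST f hf⟩,
    fun f g hf hg h => ?_, fun f g hf hg h => ?_⟩, hST, fun g hg => (hS g hg).2⟩
  · have := hST _ (lip_add _ _ (hS f hf).1 (hS g hg).1)
    rwa [hT.map_add _ _ (hS f hf).1 (hS g hg).1, (hS f hf).2, (hS g hg).2] at this
  · have := hST _ ((hS f hf).1.const_smul c)
    rwa [hT.map_smul _ _ (hS f hf).1, (hS f hf).2] at this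
  · rw [← (hS f hf).2, ← (hS g hg).2, h]
  · refine hT.sep_inv _ _ (hS f hf).1 (hS g hg).1 ?_
    rwa [(hS f hf).2, (hS g hg).2]
  · have := hT.sep _ _ (hS f hf).1 (hS g hg).1 h
    rwa [(hS f hf).2, (hS g hg).2] at this

/-- `P` is *near* `y` (with respect to `T`) if there are nonzero Lipschitz functions carried by `P`
whose images under `T` are carried by arbitrarily small balls around `y`. -/
def Near (T : (X → E) → (Y → F)) (P : Set X) (y : Y) : Prop :=
  ∀ δ > 0, ∃ g : X → E, IsLip g ∧ g ≠ 0 ∧ coz g ⊆ P ∧ coz (T g) ⊆ ball y δ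

/-- `x` and `y` are related by `T` if every ball around `x` is near `y`. This notion is symmetric
with respect to passing to the inverse of `T`. -/
def Related (T : (X → E) → (Y → F)) (x : X) (y : Y) : Prop :=
  ∀ ε > 0, Near T (ball x ε) y

/-- The value `T f y` depends only on the restriction of `f` to a set near `y`. -/
lemma Near.eq (hT : IsBisep ℝ T) {P : Set X} {y : Y} (hP : Near T P y) {f f' : X → E}
    (hf : IsLip f) (hf' : IsLip f') (h : ∀ z ∈ P, f z = f' z) : T f y = T f' y := by
  by_contra hne
  have hlip := hT.maps_lip _ (hf.sub hf')
  have h1 : T (f - f') y ≠ 0 := by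
    rw [hT.map_sub hf hf']; exact sub_ne_zero.2 hne
  have h2 : {z | T (f - f') z ≠ 0} ∈ nhds y :=
    (isOpen_ne_fun hlip.continuous continuous_const).mem_nhds h1
  obtain ⟨δ, hδ, hball⟩ := Metric.mem_nhds_iff.1 h2
  obtain ⟨g, hg, hg0, hgP, hgT⟩ := hP δ hδ
  have hTg : T g ≠ 0 := fun h0 => hg0 (hT.inj _ _ hg isLip_zero (by rw [h0, hT.map_zero]))
  obtain ⟨z, hz⟩ := Function.ne_iff.1 hTg
  have hdisj : coz (f - f') ∩ coz g = ∅ := by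
    ext w
    simp only [mem_inter_iff, mem_empty_iff_false, iff_false, not_and]
    intro hw hwg
    exact hw (by simp [h w (hgP hwg)])
  have := hT.sep _ _ (hf.sub hf') hg hdisj
  exact (this.subset ⟨hball (hgT hz), hz⟩ : z ∈ (∅ : Set Y))

lemma coz_subset_closure [Nontrivial F] (hT : IsBisep ℝ T) {g g' : X → E} (hg : IsLip g)
    (hg' : IsLip g') (h : coz g' ⊆ coz g) : coz (T g') ⊆ closure (coz (T g)) := by
  intro y hy
  by_contra hcl
  obtain ⟨u, hu⟩ := exists_ne (0 : F)
  obtain ⟨r, hr, hball⟩ := Metric.isOpen_iff.1 isClosed_closure.isOpen_compl y hcl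
  obtain ⟨k, hk, hTk⟩ := hT.surj _ ((isLip_const (X := Y) u).cone_smul y hr)
  have h1 : coz (T k) ∩ coz (T g) = ∅ := by
    ext w
    simp only [mem_inter_iff, mem_empty_iff_false, iff_false, not_and]
    intro hw hwg
    have hwr : r ≤ dist w y := by
      by_contra hlt
      exact hball (mem_ball.2 (not_le.1 hlt)) (subset_closure hwg)
    refine hw ?_
    rw [hTk]
    simp [max_eq_left (sub_nonpos.2 hwr)]
  have h2 := hT.sep_inv _ _ hk hg h1
  have h3 : coz k ∩ coz g' = ∅ := subset_empty_iff.1 ((inter_subset_inter_right _ h).trans h2.subset)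
  have h4 := hT.sep _ _ hk hg' h3
  refine (h4.subset ⟨?_, hy⟩ : y ∈ (∅ : Set Y))
  change T k y ≠ 0
  rw [hTk]
  simp [hr.le, hr.ne', hu]

/-- Cutting off a function near a point of its cozero set keeps the image under `T` small. -/
lemma Near.of_points [Nontrivial F] (hT : IsBisep ℝ T) {P : Set X} {y : Y}
    (h : ∀ δ > 0, ∃ g : X → E, IsLip g ∧ coz (T g) ⊆ ball y δ ∧
      ∃ p, g p ≠ 0 ∧ ∃ r > 0, ball p r ⊆ P) : Near T P y := by
  intro δ hδ
  obtain ⟨g, hg, hgT, p, hp, r, hr, hrP⟩ := h (δ / 2) (half_pos hδ)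
  refine ⟨_, hg.cone_smul p hr, ?_, ?_, ?_⟩
  · refine Function.ne_iff.2 ⟨p, ?_⟩
    simp [hr.le, hr.ne', hp]
  · intro z hz
    apply hrP
    by_contra hzb
    rw [mem_ball, not_lt] at hzb
    exact hz (by simp [max_eq_left (sub_nonpos.2 hzb)])
  · refine (coz_subset_closure hT hg (hg.cone_smul p hr) ?_).trans ?_
    · intro z hz h0
      exact hz (by simp [h0])
    · exact (closure_mono hgT).trans (closure_ball_subset_closedBall.trans
        (closedBall_subset_ball (half_lt_self hδ)))

/-- If disjoint balls `ball (x n) (s n)` accumulate at `y` in the sense of `T`, and `f` can be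
switched off on every other ball while staying Lipschitz (which the Lipschitz dominant `d`,
comparable with `s n` on these balls, guarantees), then `T f y = 0`. -/
lemma two_color [Nontrivial F] (hT : IsBisep ℝ T) {y : Y} {f : X → E} (hf : IsLip f)
    (d : X → ℝ) (Kd L c : ℝ) (hd0 : ∀ z, 0 ≤ d z) (hd : ∀ z w, |d z - d w| ≤ Kd * dist z w)
    (hL0 : 0 ≤ L) (hL : ∀ z, ‖f z‖ ≤ L * d z) (hc : 0 ≤ c)
    (x : ℕ → X) (s : ℕ → ℝ) (hs : ∀ n, 0 < s n)
    (hds : ∀ n, ∀ z ∈ ball (x n) (s n), d z ≤ c * s n)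
    (hsep : ∀ m n, m ≠ n → s m + s n ≤ dist (x m) (x n))
    (hy : ∀ δ > 0, ∃ N, ∀ n ≥ N, ∃ g : X → E, IsLip g ∧ coz (T g) ⊆ ball y δ ∧ g (x n) ≠ 0) :
    T f y = 0 := by
  set U : Set X := ⋃ n, ball (x (2 * n)) (s (2 * n)) with hU
  set P : Set X := ⋃ n, ball (x (2 * n)) (s (2 * n) / 2) with hP
  set Q : Set X := ⋃ n, ball (x (2 * n + 1)) (s (2 * n + 1)) with hQ
  have hUQ : ∀ z ∈ Q, z ∈ Uᶜ := by
    intro z hz hzU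
    simp only [hU, hQ, mem_iUnion, mem_ball] at hz hzU
    obtain ⟨n, hn⟩ := hz
    obtain ⟨m, hm⟩ := hzU
    have h1 := hsep (2 * n + 1) (2 * m) (by omega)
    have h2 := dist_triangle_left (x (2 * n + 1)) (x (2 * m)) z
    linarith
  have hUne : (Uᶜ).Nonempty :=
    ⟨x 1, hUQ _ (mem_iUnion.2 ⟨0, mem_ball_self (hs 1)⟩)⟩
  let m : X → ℝ := fun z => min (d z) (2 * c * infDist z Uᶜ)
  have hmlip : ∀ z w, |m z - m w| ≤ max Kd (2 * c) * dist z w := by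
    intro z w
    refine (abs_min_sub_min_le_max _ _ _ _).trans (max_le ?_ ?_)
    · exact (hd z w).trans (by gcongr; exact le_max_left _ _)
    · have h1 : |infDist z Uᶜ - infDist w Uᶜ| ≤ dist z w := by
        have := (lipschitz_infDist_pt (Uᶜ)).dist_le_mul z w
        simpa [Real.dist_eq] using this
      rw [← mul_sub, abs_mul, abs_of_nonneg (by positivity : 0 ≤ 2 * c)]
      exact mul_le_mul (le_max_right _ _) h1 (abs_nonneg _)
        (le_max_of_le_right (by positivity))
  have hm0 : ∀ z, 0 ≤ m z := fun z =>
    le_min (hd0 z) (mul_nonneg (by positivity) infDist_nonneg)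
  have hlip := hf.scale hd hmlip hm0 (fun z => min_le_left _ _) hL0 hL
  have hcol : ∀ (i : ℕ → ℕ), (∀ n, n ≤ i n) → ∀ W : Set X,
      (∀ n, ∃ r > 0, ball (x (i n)) r ⊆ W) → Near T W y := by
    intro i hi W hW
    refine Near.of_points hT fun δ hδ => ?_
    obtain ⟨N, hN⟩ := hy δ hδ
    obtain ⟨g, hg, hgT, hgx⟩ := hN (i N) (hi N)
    exact ⟨g, hg, hgT, x (i N), hgx, hW N⟩
  have hPn : Near T P y := hcol (fun n => 2 * n) (fun n => by omega) P fun n =>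
    ⟨s (2 * n) / 2, half_pos (hs _),
      subset_iUnion (fun n => ball (x (2 * n)) (s (2 * n) / 2)) n⟩
  have hQn : Near T Q y := hcol (fun n => 2 * n + 1) (fun n => by omega) Q fun n =>
    ⟨s (2 * n + 1), hs _, subset_iUnion (fun n => ball (x (2 * n + 1)) (s (2 * n + 1))) n⟩
  have e1 : T f y = T (fun z => (m z / d z) • f z) y := by
    refine hPn.eq hT hf hlip fun z hz => ?_
    simp only [hP, mem_iUnion, mem_ball] at hz
    obtain ⟨n, hn⟩ := hz
    have h1 : s (2 * n) / 2 ≤ infDist z Uᶜ := by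
      rw [le_infDist hUne]
      intro w hw
      by_contra hlt
      apply hw
      refine mem_iUnion.2 ⟨n, mem_ball.2 ?_⟩
      have := dist_triangle_left w (x (2 * n)) z
      linarith
    have h2 := hds (2 * n) z (mem_ball.2 (by linarith [hs (2 * n)]))
    have h3 : m z = d z := min_eq_left (h2.trans (by nlinarith))
    by_cases h0 : d z = 0
    · have : f z = 0 := by
        have := hL z
        rw [h0, mul_zero] at this
        exact norm_le_zero_iff.1 this
      rw [this, smul_zero]
    · rw [h3, div_self h0, one_smul]
  have e2 : T (fun z => (m z / d z) • f z) y = T 0 y := by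
    refine hQn.eq hT hlip isLip_zero fun z hz => ?_
    have : m z = 0 := by
      simp only [m, infDist_zero_of_mem (hUQ z hz), mul_zero]
      exact min_eq_right (hd0 z)
    simp [this]
  rw [e1, e2, hT.map_zero, Pi.zero_apply]

/-! ### The support map -/

lemma Related.apply_eq_zero [Nontrivial F] (hT : IsBisep ℝ T) {x : X} {y : Y} (h : Related T x y)
    {f : X → E} (hf : IsLip f) (hfx : f x = 0) : T f y = 0 := by
  by_cases hiso : ∃ ε > 0, ∀ g : X → E, IsLip g → coz g ⊆ ball x ε → coz (T g) ⊆ ball y ε →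
      coz g ⊆ {x}
  · obtain ⟨ε, hε, hiso⟩ := hiso
    have hn : Near T {x} y := by
      intro δ hδ
      obtain ⟨g, hg, hg0, hgx, hgy⟩ := h ε hε (min δ ε) (lt_min hδ hε)
      exact ⟨g, hg, hg0, hiso g hg hgx (hgy.trans (ball_subset_ball (min_le_right _ _))),
        hgy.trans (ball_subset_ball (min_le_left _ _))⟩
    rw [hn.eq hT hf isLip_zero (by rintro z rfl; exact hfx), hT.map_zero, Pi.zero_apply]
  · push Not at hiso
    have hiso' : ∀ n : ℕ, ∃ g : X → E, ∃ p, IsLip g ∧ coz g ⊆ ball x (1 / ((n : ℝ) + 1)) ∧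
        coz (T g) ⊆ ball y (1 / ((n : ℝ) + 1)) ∧ g p ≠ 0 ∧ p ≠ x := by
      intro n
      obtain ⟨g, hg, h1, h2, h3⟩ := hiso (1 / ((n : ℝ) + 1)) Nat.one_div_pos_of_nat
      obtain ⟨p, hp, hpx⟩ := not_subset.1 h3
      exact ⟨g, p, hg, h1, h2, hp, hpx⟩
    choose g p hg hgx hgy hp hpx using hiso'
    have htend : Filter.Tendsto p Filter.atTop (nhds x) := by
      rw [tendsto_iff_dist_tendsto_zero]
      exact squeeze_zero (fun _ => dist_nonneg) (fun n => (mem_ball.1 (hgx n (hp n))).le)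
        tendsto_one_div_add_atTop_nhds_zero_nat
    obtain ⟨φ, hφ, hne, hsep⟩ := exists_subseq_sparse htend (Filter.Frequently.of_forall hpx)
    obtain ⟨K, hK0, hK⟩ := hf.exists_lip
    refine two_color hT hf (fun z => dist z x) 1 K 5 (fun _ => dist_nonneg)
      (abs_dist_sub_dist_le x) hK0 (fun z => ?_) (by norm_num) (fun n => p (φ n))
      (fun n => dist (p (φ n)) x / 4) (fun n => ?_) (fun n z hz => ?_) hsep (fun δ hδ => ?_)
    · have := hK z x
      rwa [hfx, sub_zero] at this
    · have := dist_pos.2 (hne n)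
      positivity
    · rw [mem_ball] at hz
      have := dist_triangle z (p (φ n)) x
      change dist z x ≤ _
      linarith
    · obtain ⟨N, hN⟩ := exists_nat_one_div_lt hδ
      refine ⟨N, fun n hn => ⟨g (φ n), hg _, (hgy _).trans (ball_subset_ball ?_), hp _⟩⟩
      exact (Nat.one_div_le_one_div (hn.trans (hφ.id_le n))).trans hN.le

lemma exists_related [CompleteSpace X] [Nontrivial F] (hT : IsBisep ℝ T) (y : Y) :
    ∃ x, Related T x y := by
  obtain ⟨u, hu⟩ := exists_ne (0 : F)
  have hex : ∀ n : ℕ, ∃ g : X → E, ∃ p, IsLip g ∧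
      coz (T g) ⊆ ball y (1 / ((n : ℝ) + 1)) ∧ g p ≠ 0 := by
    intro n
    have hr : 0 < 1 / ((n : ℝ) + 1) := Nat.one_div_pos_of_nat
    obtain ⟨g, hg, hTg⟩ := hT.surj _ ((isLip_const (X := Y) u).cone_smul y hr)
    have hg0 : g ≠ 0 := by
      rintro rfl
      rw [hT.map_zero] at hTg
      have := congrFun hTg y
      simp only [dist_self, sub_zero, max_eq_right hr.le, div_self hr.ne', one_smul,
        Pi.zero_apply] at this
      exact hu this.symm
    obtain ⟨p, hp⟩ := Function.ne_iff.1 hg0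
    refine ⟨g, p, hg, fun z hz => ?_, hp⟩
    by_contra hzb
    rw [mem_ball, not_lt] at hzb
    refine hz ?_
    rw [hTg]
    simp only [max_eq_left (sub_nonpos.2 hzb), zero_div, zero_smul]
  choose g p hg hgy hp using hex
  rcases exists_subseq_dichotomy p with ⟨a, φ, hφ, ha⟩ | ⟨δ, hδ, φ, hφ, hsep⟩
  · refine ⟨a, fun ε hε => Near.of_points hT fun η hη => ?_⟩
    obtain ⟨N, hN⟩ := exists_nat_one_div_lt hη
    obtain ⟨n, hn, hna⟩ := ((Filter.eventually_ge_atTop N).and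
      (Metric.tendsto_nhds.1 ha ε hε)).exists
    refine ⟨g (φ n), hg _, (hgy _).trans (ball_subset_ball ?_), p (φ n), hp _,
      Metric.isOpen_iff.1 isOpen_ball _ (mem_ball.2 hna)⟩
    exact (Nat.one_div_le_one_div (hn.trans (hφ.id_le n))).trans hN.le
  · exfalso
    obtain ⟨f, hf, hTf⟩ := hT.surj _ (isLip_const (X := Y) u)
    obtain ⟨C, hC0, hC⟩ := hf.exists_bound
    have := two_color hT (y := y) hf (fun _ => 1) 0 C (2 / δ) (by simp) (by simp) hC0
      (by simpa using hC) (by positivity) (fun n => p (φ n)) (fun _ => δ / 2)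
      (fun _ => half_pos hδ) (fun n z _ => le_of_eq (by field_simp))
      (fun m n hmn => by linarith [hsep m n hmn])
      (fun η hη => by
        obtain ⟨N, hN⟩ := exists_nat_one_div_lt hη
        refine ⟨N, fun n hn => ⟨g (φ n), hg _, (hgy _).trans (ball_subset_ball ?_), hp _⟩⟩
        exact (Nat.one_div_le_one_div (hn.trans (hφ.id_le n))).trans hN.le)
    rw [hTf] at this
    exact hu this

/-- `T f y` vanishes exactly when `f` vanishes at `h y`, for a bijection `h : Y → X`. -/
lemma exists_support_map [CompleteSpace X] [CompleteSpace Y] [Nontrivial E] [Nontrivial F]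
    (hT : IsBisep ℝ T) : ∃ h : Y → X, Function.Bijective h ∧
      ∀ y f, IsLip f → (f (h y) = 0 ↔ T f y = 0) := by
  obtain ⟨S, hS, hST, hTS⟩ := hT.exists_inverse
  have hsymm : ∀ x y, Related T x y → Related S y x := by
    intro x y h ε hε δ hδ
    obtain ⟨g, hg, hg0, h1, h2⟩ := h δ hδ ε hε
    refine ⟨T g, hT.maps_lip g hg, fun h0 => hg0 ?_, h2, by rwa [hST g hg]⟩
    rw [← hST g hg, h0, hS.map_zero]
  have hsymm' : ∀ x y, Related S y x → Related T x y := by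
    intro x y h ε hε δ hδ
    obtain ⟨g, hg, hg0, h1, h2⟩ := h δ hδ ε hε
    refine ⟨S g, hS.maps_lip g hg, fun h0 => hg0 ?_, h2, by rwa [hTS g hg]⟩
    rw [← hTS g hg, h0, hT.map_zero]
  have hiff : ∀ x y, Related T x y → ∀ f, IsLip f → (f x = 0 ↔ T f y = 0) := by
    intro x y h f hf
    refine ⟨h.apply_eq_zero hT hf, fun h0 => ?_⟩
    have := (hsymm x y h).apply_eq_zero hS (hT.maps_lip f hf) h0
    rwa [hST f hf] at this
  choose h hh using fun y => exists_related hT y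
  refine ⟨h, ⟨fun y y' hyy => ?_, fun x => ?_⟩, fun y f hf => hiff _ _ (hh y) f hf⟩
  · by_contra hne
    obtain ⟨u, hu⟩ := exists_ne (0 : F)
    have hr : 0 < dist y y' := dist_pos.2 hne
    obtain ⟨g, hg, hTg⟩ := hT.surj _ ((isLip_const (X := Y) u).cone_smul y' hr)
    have h1 := hiff _ _ (hh y) g hg
    have h2 := hiff _ _ (hh y') g hg
    rw [hyy, h2, hTg] at h1
    simp [hr.ne', hu] at h1
  · obtain ⟨y, hy⟩ := exists_related hS x
    have hxy := hsymm' x y hy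
    refine ⟨y, ?_⟩
    by_contra hne
    obtain ⟨e, he⟩ := exists_ne (0 : E)
    have hr : 0 < dist (h y) x := dist_pos.2 hne
    have hg := (isLip_const (X := X) e).cone_smul x hr
    have h1 := hiff _ _ (hh y) _ hg
    have h2 := hiff _ _ hxy _ hg
    rw [← h2] at h1
    simp [hr.ne', he] at h1

/-! ### Uniform bounds for the fibre maps -/

/-- The fibre map `J_y : e ↦ (T ê) y`. -/
def fibre (hT : IsBisep ℝ T) (y : Y) : E →ₗ[ℝ] F where
  toFun e := T (fun _ => e) y
  map_add' a b := congrFun (hT.map_add (fun _ => a) (fun _ => b) (isLip_const a) (isLip_const b)) y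
  map_smul' c a := congrFun (hT.map_smul c (fun _ => a) (isLip_const a)) y

lemma apply_eq_fibre (hT : IsBisep ℝ T) {h : Y → X}
    (hh : ∀ y f, IsLip f → (f (h y) = 0 ↔ T f y = 0)) {f : X → E} (hf : IsLip f) (y : Y) :
    T f y = fibre hT y (f (h y)) := by
  have h1 := (hh y _ (hf.sub (isLip_const (f (h y))))).1 (by simp)
  rw [hT.map_sub hf (isLip_const _)] at h1
  exact sub_eq_zero.1 h1

/-- The inverse of the support map is Lipschitz at each point: compare the preimages under `T` of
`dist · b • u` and of the constant `u`. -/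
lemma inverse_lipschitz_at [Nontrivial F] (hYb : IsBounded (univ : Set Y)) (hT : IsBisep ℝ T)
    {h : Y → X} (hh : ∀ y f, IsLip f → (f (h y) = 0 ↔ T f y = 0)) (b : Y) :
    ∃ K : ℝ, 0 ≤ K ∧ ∀ᶠ z in nhds (h b), ∀ y, h y = z → dist y b ≤ K * dist (h y) (h b) := by
  obtain ⟨u, hu⟩ := exists_ne (0 : F)
  obtain ⟨D, hD⟩ := Metric.isBounded_iff.1 hYb
  have hglip : IsLip (fun z : Y => dist z b • u) := by
    refine IsLip.of_bounds ‖u‖ (D * ‖u‖) (fun z w => ?_) (fun z => ?_)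
    · rw [← sub_smul, norm_smul, Real.norm_eq_abs, mul_comm]
      gcongr
      simpa using abs_dist_sub_dist_le b z w
    · rw [norm_smul, Real.norm_of_nonneg dist_nonneg]
      gcongr
      exact hD (mem_univ z) (mem_univ b)
  obtain ⟨w, hw, hTw⟩ := hT.surj _ hglip
  obtain ⟨v, hv, hTv⟩ := hT.surj _ (isLip_const (X := Y) u)
  have hwv : ∀ y, w (h y) = dist y b • v (h y) := by
    intro y
    have hcv : IsLip (dist y b • v) := hv.const_smul _
    have h1 := (hh y _ (hw.sub hcv)).2 (by
      rw [hT.map_sub hw hcv, hT.map_smul _ _ hv, hTw, hTv]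
      simp)
    exact sub_eq_zero.1 h1
  have hwb : w (h b) = 0 := by rw [hwv b]; simp
  have hvb : v (h b) ≠ 0 := fun h0 => hu (by
    have := (hh b v hv).1 h0
    rwa [hTv] at this)
  have hpos : 0 < ‖v (h b)‖ := norm_pos_iff.2 hvb
  obtain ⟨K, hK0, hK⟩ := hw.exists_lip
  refine ⟨2 * K / ‖v (h b)‖, by positivity, ?_⟩
  have hev : ∀ᶠ z in nhds (h b), ‖v (h b)‖ / 2 < ‖v z‖ :=
    (hv.continuous.norm.tendsto (h b)).eventually_const_lt (half_lt_self hpos)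
  filter_upwards [hev] with z hz y hy
  subst hy
  have h1 := hK (h y) (h b)
  rw [hwb, sub_zero, hwv, norm_smul, Real.norm_of_nonneg dist_nonneg] at h1
  have h2 : dist y b * (‖v (h b)‖ / 2) ≤ K * dist (h y) (h b) :=
    (mul_le_mul_of_nonneg_left hz.le dist_nonneg).trans h1
  rw [div_mul_eq_mul_div, le_div_iff₀ hpos]
  linarith

/-- Some constant bounds all but finitely many fibre maps. -/
lemma exists_finite_exceptional [CompleteSpace X] [CompleteSpace Y] [Nontrivial E] [Nontrivial F]
    (hXb : IsBounded (univ : Set X)) (hYb : IsBounded (univ : Set Y)) (hT : IsBisep ℝ T) :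
    ∃ C : ℝ, {y : Y | ¬ ∀ e : E, ‖fibre hT y e‖ ≤ C * ‖e‖}.Finite := by
  classical
  obtain ⟨h, ⟨hinj, hsurj⟩, hh⟩ := exists_support_map hT
  by_contra hcon
  push Not at hcon
  -- distinct points `y n` with fibre maps exceeding the bound `n`
  obtain ⟨q, hq, hqr⟩ := exists_seq_of_forall_finset_exists
    (fun p : Y × ℕ => ∃ e : E, (p.2 : ℝ) * ‖e‖ < ‖fibre hT p.1 e‖)
    (fun p q => p.1 ≠ q.1 ∧ p.2 < q.2) (by
      intro s _
      obtain ⟨y, hy, hys⟩ := ((hcon ((s.sup Prod.snd + 1 : ℕ) : ℝ))).exists_notMem_finset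
        (s.image Prod.fst)
      simp only [mem_ofPred_eq] at hy
      refine ⟨(y, s.sup Prod.snd + 1), hy, fun p hp => ⟨?_, ?_⟩⟩
      · rintro rfl
        exact hys (Finset.mem_image_of_mem _ hp)
      · exact Nat.lt_succ_of_le (Finset.le_sup (f := Prod.snd) hp))
  have hqn : ∀ n, n ≤ (q n).2 :=
    (strictMono_nat_of_lt_succ fun n => (hqr n (n + 1) n.lt_succ_self).2).id_le
  have hunit : ∀ n : ℕ, ∃ e : E, ‖e‖ ≤ 1 ∧ (n : ℝ) < ‖fibre hT (q n).1 e‖ := by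
    intro n
    obtain ⟨e, he⟩ := hq n
    have he0 : e ≠ 0 := by rintro rfl; simp at he
    have hpos : 0 < ‖e‖ := norm_pos_iff.2 he0
    refine ⟨‖e‖⁻¹ • e, ?_, ?_⟩
    · rw [norm_smul, norm_inv, norm_norm, inv_mul_cancel₀ hpos.ne']
    · rw [map_smul, norm_smul, norm_inv, norm_norm, ← div_eq_inv_mul, lt_div_iff₀ hpos]
      refine lt_of_le_of_lt ?_ he
      have : (n : ℝ) ≤ ((q n).2 : ℝ) := by exact_mod_cast hqn n
      gcongr
  choose e he1 he using hunit
  have hxinj : Function.Injective fun n => h (q n).1 := by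
    intro m n hmn
    by_contra hne
    rcases lt_or_gt_of_ne hne with h1 | h1
    · exact (hqr _ _ h1).1 (hinj hmn)
    · exact (hqr _ _ h1).1 (hinj hmn).symm
  obtain ⟨D, hD⟩ := Metric.isBounded_iff.1 hXb
  have hval : ∀ (f : X → E), IsLip f → ∀ n (r : ℝ), 0 < r → f (h (q n).1) = r • e n →
      r * n ≤ ‖T f (q n).1‖ := by
    intro f hf n r hr hfn
    rw [apply_eq_fibre hT hh hf, hfn, map_smul, norm_smul, Real.norm_of_nonneg hr.le]
    exact mul_le_mul_of_nonneg_left (he n).le hr.le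
  rcases exists_subseq_dichotomy (fun n => h (q n).1) with
    ⟨a, φ, hφ, ha⟩ | ⟨δ, hδ, φ, hφ, hsep⟩
  · obtain ⟨b, rfl⟩ := hsurj a
    have hne : ∃ᶠ n in Filter.atTop, ((fun n => h (q n).1) ∘ φ) n ≠ h b := by
      apply Filter.Eventually.frequently
      have hfin : {n | ((fun n => h (q n).1) ∘ φ) n = h b}.Finite :=
        Set.Subsingleton.finite fun m hm n hn =>
          (hxinj.comp hφ.injective) (Eq.trans hm (Eq.symm hn))
      have := hfin.compl_mem_cofinite
      rw [Nat.cofinite_eq_atTop] at this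
      exact this
    obtain ⟨ψ, hψ, hne', hsep⟩ := exists_subseq_sparse ha hne
    simp only [Function.comp_apply] at hne' hsep
    have hpos : ∀ n, 0 < dist (h (q (φ (ψ n))).1) (h b) / 4 := fun n => by
      have := dist_pos.2 (hne' n)
      positivity
    obtain ⟨f, hf, hfx, hf0⟩ := exists_cone_sum (fun n => h (q (φ (ψ n))).1)
      (fun n => dist (h (q (φ (ψ n))).1) (h b) / 4) (fun n => e (φ (ψ n))) D hpos
      (fun n => by
        have := hD (mem_univ (h (q (φ (ψ n))).1)) (mem_univ (h b))
        linarith [hpos n]) hsep (fun n => he1 _)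
    have hTb : T f b = 0 := (hh b f hf).1 (hf0 _ fun n => by
      rw [dist_comm (h b)]; linarith [hpos n])
    obtain ⟨L, hL0, hL⟩ := (hT.maps_lip f hf).exists_lip
    obtain ⟨K, hK0, hK⟩ := inverse_lipschitz_at hYb hT hh b
    have htend := ha.comp hψ.tendsto_atTop
    obtain ⟨N, hN⟩ := exists_nat_gt (4 * L * K)
    obtain ⟨n, hn, hnK⟩ := ((Filter.eventually_ge_atTop N).and (htend.eventually hK)).exists
    have h1 := hnK _ rfl
    have h2 := hval f hf _ _ (hpos n) (hfx n)
    have h3 := hL (q (φ (ψ n))).1 b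
    rw [hTb, sub_zero] at h3
    have h4 : (N : ℝ) ≤ (φ (ψ n) : ℝ) := by
      exact_mod_cast hn.trans ((hψ.id_le n).trans (hφ.id_le _))
    have h5 := mul_le_mul_of_nonneg_left h1 hL0
    have h6 := hpos n
    have h7 := mul_lt_mul_of_pos_left (hN.trans_le h4) h6
    linarith
  · obtain ⟨f, hf, hfx, -⟩ := exists_cone_sum (fun n => h (q (φ n)).1) (fun _ => δ / 2)
      (fun n => e (φ n)) (δ / 2) (fun _ => half_pos hδ) (fun _ => le_rfl)
      (fun m n hmn => by linarith [hsep m n hmn]) (fun n => he1 _)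
    obtain ⟨C, hC0, hC⟩ := (hT.maps_lip f hf).exists_bound
    obtain ⟨n, hn⟩ := exists_nat_gt (2 * C / δ)
    have h2 := hval f hf _ _ (half_pos hδ) (hfx n)
    have h4 : (n : ℝ) ≤ (φ n : ℝ) := by exact_mod_cast hφ.id_le n
    rw [div_lt_iff₀ hδ] at hn
    have h5 := mul_le_mul_of_nonneg_left h4 hδ.le
    linarith [hC (q (φ n)).1]

lemma discontinuity_set_real [CompleteSpace X] [CompleteSpace Y] [Nontrivial E] [Nontrivial F]
    (hXb : IsBounded (univ : Set X)) (hYb : IsBounded (univ : Set Y)) (hT : IsBisep ℝ T) :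
    (∃ C : ℝ, ∀ y : Y, y ∉ {y : Y | ¬ Continuous (fun e : E => T (fun _ => e) y)} →
        ∀ e : E, ‖T (fun _ => e) y‖ ≤ C * ‖e‖) ∧
    {y : Y | ¬ Continuous (fun e : E => T (fun _ => e) y)}.Finite ∧
    ∀ y ∈ {y : Y | ¬ Continuous (fun e : E => T (fun _ => e) y)},
      IsOpen ({y} : Set Y) := by
  obtain ⟨C, hC⟩ := exists_finite_exceptional hXb hYb hT
  have hcont : ∀ (D : ℝ) (y : Y), (∀ e : E, ‖fibre hT y e‖ ≤ D * ‖e‖) →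
      Continuous (fun e : E => T (fun _ => e) y) := fun D y h =>
    ((fibre hT y).mkContinuous D h).continuous
  have hfin : {y : Y | ¬ Continuous (fun e : E => T (fun _ => e) y)}.Finite :=
    hC.subset fun y hy h => hy (hcont C y h)
  have hbd : ∀ y, ∃ D : ℝ, Continuous (fun e : E => T (fun _ => e) y) →
      ∀ e : E, ‖T (fun _ => e) y‖ ≤ D * ‖e‖ := by
    intro y
    by_cases hy : Continuous (fun e : E => T (fun _ => e) y)
    · exact ⟨‖(⟨fibre hT y, hy⟩ : E →L[ℝ] F)‖, fun _ e =>
        (⟨fibre hT y, hy⟩ : E →L[ℝ] F).le_opNorm e⟩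
    · exact ⟨0, fun h => absurd h hy⟩
  choose D hD using hbd
  obtain ⟨M, hM⟩ := (hC.image D).bddAbove
  have hB : ∀ y : Y, y ∉ {y : Y | ¬ Continuous (fun e : E => T (fun _ => e) y)} →
      ∀ e : E, ‖T (fun _ => e) y‖ ≤ max C M * ‖e‖ := by
    intro y hy e
    simp only [mem_ofPred_eq, not_not] at hy
    by_cases hyC : ∀ e : E, ‖fibre hT y e‖ ≤ C * ‖e‖
    · exact (hyC e).trans (by gcongr; exact le_max_left _ _)
    · refine (hD y hy e).trans ?_
      gcongr
      exact le_max_of_le_right (hM (mem_image_of_mem D hyC))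
  refine ⟨⟨_, hB⟩, hfin, fun y hy => ?_⟩
  by_contra hopen
  have hne : (nhdsWithin y {y}ᶜ).NeBot := by
    rw [Filter.neBot_iff]
    intro h0
    exact hopen ((isOpen_singleton_iff_punctured_nhds y).2 h0)
  refine hy (hcont (max C M) y fun e => ?_)
  have hev : ∀ᶠ z in nhdsWithin y {y}ᶜ, ‖T (fun _ => e) z‖ ≤ max C M * ‖e‖ := by
    have h1 : (({z : Y | ¬ Continuous (fun e : E => T (fun _ => e) z)} \ {y})ᶜ) ∈ nhds y :=
      (hfin.subset sdiff_subset).isClosed.isOpen_compl.mem_nhds (by simp)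
    filter_upwards [nhdsWithin_le_nhds h1, self_mem_nhdsWithin] with z hz hzy
    exact hB z (fun hzd => hz ⟨hzd, hzy⟩) e
  exact le_of_tendsto (((hT.maps_lip _ (isLip_const e)).continuous.norm.tendsto y).mono_left
    nhdsWithin_le_nhds) hev

end Bisep

/-- For a biseparating `T`, with `J y : e ↦ (T ê) y` and
`Y_d = {y | J y discontinuous}`: the operator norms of the continuous `J y` are uniformly
bounded, `Y_d` is finite, and every point of `Y_d` is isolated in `Y`. -/
theorem biseparating_discontinuity_set
    {𝕂 X Y E F : Type*} [RCLike 𝕂]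
    [MetricSpace X] [CompleteSpace X] [MetricSpace Y] [CompleteSpace Y]
    [NormedAddCommGroup E] [NormedSpace 𝕂 E] [Nontrivial E]
    [NormedAddCommGroup F] [NormedSpace 𝕂 F] [Nontrivial F]
    (hXb : IsBounded (univ : Set X)) (hYb : IsBounded (univ : Set Y))
    (T : (X → E) → (Y → F)) (hT : IsBisep 𝕂 T) :
    (∃ C : ℝ, ∀ y : Y, y ∉ {y : Y | ¬ Continuous (fun e : E => T (fun _ => e) y)} →
        ∀ e : E, ‖T (fun _ => e) y‖ ≤ C * ‖e‖) ∧
    {y : Y | ¬ Continuous (fun e : E => T (fun _ => e) y)}.Finite ∧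
    ∀ y ∈ {y : Y | ¬ Continuous (fun e : E => T (fun _ => e) y)},
      IsOpen ({y} : Set Y) := by
  let _ : NormedSpace ℝ E := NormedSpace.restrictScalars ℝ 𝕂 E
  let _ : NormedSpace ℝ F := NormedSpace.restrictScalars ℝ 𝕂 F
  refine discontinuity_set_real hXb hYb (T := T) ?_
  exact ⟨hT.maps_lip, hT.map_add, fun c f hf => hT.map_smul (algebraMap ℝ 𝕂 c) f hf,
    hT.inj, hT.surj, hT.sep, hT.sep_inv⟩
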